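/- Let ν be an s-graphon, let k, K ∈ ℕ, and let f_1,…,f_k be non-negative Borel functions on [0,1] whose sum is the constant function 1 and with ∫ f_i dλ = 1/k for each i; let M(i,j) = ∫ f_i(x) f_j(y) dν(x,y). For r = 1,…,K define g_r = k · Σ_{i=1}^k λ( ((i−1)/k, i/k) ∩ ((r−1)/K, r/K) ) · f_i. Then g_1,…,g_K are non-negative Borel functions whose sum is the constant function 1, with ∫ g_r dλ = 1/K for each r; moreover, the matrix N(r,s) = ∫ g_r(x) g_s(y) dν(x,y) belongs to the K-shape C(ν,K) and satisfies μ_N( ((r−1)/K, r/K) × ((s−1)/K, s/K) ) = μ_M( ((r−1)/K, r/K) × ((s−1)/K, s/K) ) for all r,s = 1,…,K. -/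

import Mathlib

open MeasureTheory Topology Filter

noncomputable section

/-- The unit square `[0,1]²`. -/
abbrev Sq : Type := unitInterval × unitInterval

/-- Convergence of a sequence of subsets in the Vietoris topology
(upper + lower Vietoris convergence). -/
def VietorisTendsto {X : Type*} [TopologicalSpace X] (A : ℕ → Set X) (B : Set X) : Prop :=
  (∀ U : Set X, IsOpen U → B ⊆ U → ∀ᶠ n in atTop, A n ⊆ U) ∧
  (∀ U : Set X, IsOpen U → (B ∩ U).Nonempty → ∀ᶠ n in atTop, (A n ∩ U).Nonempty)

/-- A measure on the unit square is symmetric if it is invariant under the coordinate swap. -/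
def IsSymmSq (μ : Measure Sq) : Prop := μ.map Prod.swap = μ

/-- s-graphons: symmetric Borel probability measures on the unit square,
with the weak topology. -/
def SGraphon : Type := {μ : ProbabilityMeasure Sq // IsSymmSq (μ : Measure Sq)}

instance : TopologicalSpace SGraphon :=
  inferInstanceAs (TopologicalSpace {μ : ProbabilityMeasure Sq // IsSymmSq (μ : Measure Sq)})

/-- The underlying measure of an s-graphon. -/
def SGraphon.toMeasure (μ : SGraphon) : Measure Sq := (μ.1 : Measure Sq)

/-- A non-negative bounded Borel function on the unit square is fairly distributed
if all its horizontal and vertical sections integrate (w.r.t. Lebesgue measure) to 1. -/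
structure FairlyDistributed (f : Sq → ℝ) : Prop where
  measurable : Measurable f
  nonneg : ∀ p, 0 ≤ f p
  bounded : ∃ C : ℝ, ∀ p, f p ≤ C
  row : ∀ x : unitInterval, ∫ v, f (x, v) = 1
  col : ∀ y : unitInterval, ∫ u, f (u, y) = 1

/-- The density `φ(f,μ)`. -/
def phiFn (f : Sq → ℝ) (μ : Measure Sq) (p : Sq) : ℝ :=
  ∫ q, f (q.1, p.1) * f (q.2, p.2) ∂μ

/-- The measure `Φ(f,μ)`, with density `φ(f,μ)` w.r.t. 2-dimensional Lebesgue measure. -/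
def PhiMeas (f : Sq → ℝ) (μ : Measure Sq) : Measure Sq :=
  volume.withDensity fun p => ENNReal.ofReal (phiFn f μ p)

/-- The shape of a measure `μ` on the unit square: the weak closure of the set of
(s-graphons corresponding to) the measures `Φ(f,μ)`, `f` continuous fairly distributed. -/
def shapeM (μ : Measure Sq) : Set SGraphon :=
  closure {ν : SGraphon | ∃ f : Sq → ℝ, FairlyDistributed f ∧ Continuous f ∧
    ν.toMeasure = PhiMeas f μ}

/-- The shape `C(μ)` of an s-graphon. -/
def shape (μ : SGraphon) : Set SGraphon := shapeM μ.toMeasure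

/-- A fractional partition into `k` parts: non-negative Borel functions on `[0,1]`
summing to the constant function 1, each integrating to `1/k`. -/
def IsFracPartition (k : ℕ) (f : Fin k → unitInterval → ℝ) : Prop :=
  (∀ i, Measurable (f i)) ∧ (∀ i x, 0 ≤ f i x) ∧ (∀ x, ∑ i, f i x = 1) ∧
    ∀ i, ∫ x, f i x = 1 / k

/-- The `k`-shape `C(μ,k)`: the closure in `ℝ^{k×k}` of the set of density matrices of
fractional partitions into `k` parts. -/
def kShape (μ : Measure Sq) (k : ℕ) : Set (Matrix (Fin k) (Fin k) ℝ) :=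
  closure {M | ∃ f : Fin k → unitInterval → ℝ, IsFracPartition k f ∧
    ∀ i j, M i j = ∫ p, f i p.1 * f j p.2 ∂μ}

/-- `M_k^*`: symmetric `k×k` matrices with non-negative entries summing to 1. -/
def Mstar (k : ℕ) : Set (Matrix (Fin k) (Fin k) ℝ) :=
  {M | M.IsSymm ∧ (∀ i j, 0 ≤ M i j) ∧ ∑ i, ∑ j, M i j = 1}

/-- The index `i` (0-based) with `u ∈ [i/k, (i+1)/k)` (and `i = k-1` for `u = 1`). -/
def gridIdx (k : ℕ) (hk : 0 < k) (u : unitInterval) : Fin k :=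
  ⟨min ⌊(u : ℝ) * k⌋₊ (k - 1), lt_of_le_of_lt (min_le_right _ _) (Nat.sub_lt hk one_pos)⟩

/-- The measure `μ_M` associated to a `k×k` matrix `M`: its density w.r.t. 2-dimensional
Lebesgue measure equals `k² M(i,j)` on the square `[i/k,(i+1)/k) × [j/k,(j+1)/k)` (0-based). -/
def muM {k : ℕ} (M : Matrix (Fin k) (Fin k) ℝ) : Measure Sq :=
  if hk : 0 < k then
    volume.withDensity fun p =>
      ENNReal.ofReal ((k : ℝ) ^ 2 * M (gridIdx k hk p.1) (gridIdx k hk p.2))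
  else 0

/-- `C̃(μ,k)`: the `k`-shape of `μ`, interpreted as a set of s-graphons. -/
def kShapeTilde (μ : Measure Sq) (k : ℕ) : Set SGraphon :=
  {ν : SGraphon | ∃ M ∈ kShape μ k, ν.toMeasure = muM M}

/-- The interval `I_i = [i/k, (i+1)/k)` (0-based), with `I_{k-1} = [(k-1)/k, 1]`,
as a subset of `[0,1]`. -/
def Ik (k : ℕ) (i : Fin k) : Set unitInterval :=
  if (i : ℕ) + 1 = k then Subtype.val ⁻¹' Set.Icc (((i : ℕ) : ℝ) / k) 1
  else Subtype.val ⁻¹' Set.Ico (((i : ℕ) : ℝ) / k) ((((i : ℕ) : ℝ) + 1) / k)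

/-- Open grid interval on the line. -/
def PP (k : ℕ) (i : Fin k) : Set ℝ := Set.Ioo (((i : ℕ) : ℝ) / k) ((((i : ℕ) : ℝ) + 1) / k)

/-- Open grid interval in the unit interval. -/
def QQ (k : ℕ) (i : Fin k) : Set unitInterval := Subtype.val ⁻¹' PP k i

lemma PP_sub (k : ℕ) (hk : 0 < k) (i : Fin k) : PP k i ⊆ Set.Icc 0 1 := by
  intro x hx
  have hk' : (0 : ℝ) < k := by exact_mod_cast hk
  have hi : (((i : ℕ) : ℝ) + 1) ≤ k := by exact_mod_cast i.2
  have h1 : (((i : ℕ) : ℝ) + 1) / k ≤ 1 := by rw [div_le_one hk']; exact hi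
  have h0 : (0 : ℝ) ≤ ((i : ℕ) : ℝ) / k := by positivity
  exact ⟨h0.trans hx.1.le, hx.2.le.trans h1⟩

lemma PP_meas (k : ℕ) (i : Fin k) : MeasurableSet (PP k i) := measurableSet_Ioo

lemma QQ_meas (k : ℕ) (i : Fin k) : MeasurableSet (QQ k i) :=
  measurable_subtype_coe (PP_meas k i)

lemma vol_pre (S : Set ℝ) (hS : S ⊆ Set.Icc 0 1) :
    (volume : Measure unitInterval) (Subtype.val ⁻¹' S) = volume S := by
  have h : (volume : Measure unitInterval) (Subtype.val ⁻¹' S) =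
      volume (Set.image Subtype.val (Subtype.val ⁻¹' S : Set unitInterval)) :=
    comap_subtype_coe_apply measurableSet_Icc volume _
  rw [h, Subtype.image_preimage_coe, Set.inter_eq_right.mpr hS]

lemma vol_PP (k : ℕ) (i : Fin k) : volume (PP k i) = ENNReal.ofReal (1 / k) := by
  rw [PP, Real.volume_Ioo]; congr 1; ring

lemma vol_QQ (k : ℕ) (hk : 0 < k) (i : Fin k) : volume (QQ k i) = ENNReal.ofReal (1 / k) := by
  rw [QQ, vol_pre _ (PP_sub k hk i), vol_PP]

lemma gridIdx_meas (k : ℕ) (hk : 0 < k) : Measurable (gridIdx k hk) := by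
  have h : Measurable (fun n : ℕ => (⟨min n (k - 1),
    lt_of_le_of_lt (min_le_right _ _) (Nat.sub_lt hk one_pos)⟩ : Fin k)) := measurable_from_nat
  exact h.comp (Nat.measurable_floor.comp (measurable_subtype_coe.mul_const _))

lemma gridIdx_of_mem (k : ℕ) (hk : 0 < k) (i : Fin k) (u : unitInterval) (hu : u ∈ QQ k i) :
    gridIdx k hk u = i := by
  have hk' : (0 : ℝ) < k := by exact_mod_cast hk
  have h1 : ((i : ℕ) : ℝ) < u * k := (div_lt_iff₀ hk').1 hu.1
  have h2 : (u : ℝ) * k < (i : ℕ) + 1 := (lt_div_iff₀ hk').1 hu.2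
  have h3 : ⌊(u : ℝ) * k⌋₊ = i := by
    rw [Nat.floor_eq_iff (by linarith [Nat.cast_nonneg (α := ℝ) (i : ℕ)])]
    exact ⟨h1.le, h2⟩
  apply Fin.ext
  simp only [gridIdx, h3]
  have := i.2
  omega

lemma gridIdx_mem (k : ℕ) (hk : 0 < k) (u : unitInterval) :
    (u : ℝ) ∈ Set.Icc (((gridIdx k hk u : ℕ) : ℝ) / k) ((((gridIdx k hk u : ℕ) : ℝ) + 1) / k) := by
  have hk' : (0 : ℝ) < k := by exact_mod_cast hk
  have hu : (0 : ℝ) ≤ u * k := mul_nonneg u.2.1 hk'.le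
  have hu1 : (u : ℝ) * k ≤ k := by nlinarith [u.2.2]
  rw [Set.mem_Icc, div_le_iff₀ hk', le_div_iff₀ hk']
  simp only [gridIdx]
  constructor
  · refine le_trans ?_ (Nat.floor_le hu)
    exact_mod_cast min_le_left _ _
  · rcases le_total ⌊(u : ℝ) * k⌋₊ (k - 1) with h | h
    · rw [min_eq_left h]; exact (Nat.lt_floor_add_one _).le
    · rw [min_eq_right h]
      have : (((k - 1 : ℕ) : ℝ)) + 1 = k := by exact_mod_cast Nat.sub_add_cancel hk
      rw [this]; exact hu1

lemma vol_inter_fiber (k : ℕ) (hk : 0 < k) (i : Fin k) (S : Set ℝ) (hS : S ⊆ Set.Icc 0 1) :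
    volume ((gridIdx k hk) ⁻¹' {i} ∩ Subtype.val ⁻¹' S) = volume (PP k i ∩ S) := by
  have hle : volume (PP k i ∩ S) =
      volume (Subtype.val ⁻¹' (PP k i ∩ S) : Set unitInterval) :=
    (vol_pre _ (Set.inter_subset_right.trans hS)).symm
  apply le_antisymm
  · have : volume (PP k i ∩ S) =
        volume (Set.Icc (((i : ℕ) : ℝ) / k) ((((i : ℕ) : ℝ) + 1) / k) ∩ S) :=
      measure_congr (Ioo_ae_eq_Icc.inter (ae_eq_refl _))
    rw [this, ← vol_pre _ (Set.inter_subset_right.trans hS)]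
    apply measure_mono
    rintro u ⟨hu, hu2⟩
    refine ⟨?_, hu2⟩
    have := gridIdx_mem k hk u
    rw [show gridIdx k hk u = i from hu] at this
    exact this
  · rw [hle]
    apply measure_mono
    rintro u ⟨hu, hu2⟩
    exact ⟨gridIdx_of_mem k hk i u hu, hu2⟩

/-- The weights. -/
def ww (k K : ℕ) (i : Fin k) (r : Fin K) : ℝ := (volume (PP k i ∩ PP K r)).toReal

lemma ww_comm (k K : ℕ) (i : Fin k) (r : Fin K) : ww k K i r = ww K k r i := by
  rw [ww, ww, Set.inter_comm]

lemma ww_nonneg (k K : ℕ) (i : Fin k) (r : Fin K) : 0 ≤ ww k K i r := ENNReal.toReal_nonneg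

lemma ww_ne_top (k K : ℕ) (i : Fin k) (r : Fin K) : volume (PP k i ∩ PP K r) ≠ ⊤ :=
  ne_top_of_le_ne_top (by rw [vol_PP]; exact ENNReal.ofReal_ne_top)
    (measure_mono Set.inter_subset_left)

lemma ofReal_ww (k K : ℕ) (i : Fin k) (r : Fin K) :
    ENNReal.ofReal (ww k K i r) = volume (PP k i ∩ PP K r) :=
  ENNReal.ofReal_toReal (ww_ne_top k K i r)

lemma ww_sum (k K : ℕ) (hk : 0 < k) (hK : 0 < K) (r : Fin K) : ∑ i, ww k K i r = 1 / K := by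
  have h : ∑ i, volume (PP k i ∩ PP K r) = ENNReal.ofReal (1 / K) := by
    rw [← vol_QQ K hK r]
    simp_rw [← vol_inter_fiber k hk _ _ (PP_sub K hK r)]
    have := sum_measure_preimage_singleton (μ := volume.restrict (QQ K r)) Finset.univ
      (f := gridIdx k hk) (fun i _ => gridIdx_meas k hk (measurableSet_singleton i))
    simp only [Finset.coe_univ, Set.preimage_univ, Measure.restrict_apply_univ] at this
    rw [← this]
    refine Finset.sum_congr rfl fun i _ => ?_
    rw [Measure.restrict_apply (gridIdx_meas k hk (measurableSet_singleton i))]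
    rfl
  have h2 := congrArg ENNReal.toReal h
  rw [ENNReal.toReal_sum (fun i _ => ww_ne_top k K i r),
    ENNReal.toReal_ofReal (by positivity)] at h2
  exact h2

lemma ww_sum' (k K : ℕ) (hk : 0 < k) (hK : 0 < K) (i : Fin k) : ∑ r, ww k K i r = 1 / k := by
  simp_rw [ww_comm k K]
  exact ww_sum K k hK hk i

lemma muM_rect (k K : ℕ) (hk : 0 < k) (hK : 0 < K) (M : Matrix (Fin k) (Fin k) ℝ)
    (hM : ∀ i j, 0 ≤ M i j) (r s : Fin K) :
    muM M (QQ K r ×ˢ QQ K s) =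
      ENNReal.ofReal ((k : ℝ) ^ 2 * ∑ i, ∑ j, ww k K i r * ww k K j s * M i j) := by
  have hG : Measurable (fun p : Sq => (gridIdx k hk p.1, gridIdx k hk p.2)) :=
    ((gridIdx_meas k hk).comp measurable_fst).prodMk ((gridIdx_meas k hk).comp measurable_snd)
  rw [muM, dif_pos hk, withDensity_apply _ ((QQ_meas K r).prod (QQ_meas K s))]
  have h1 : ∫⁻ p in QQ K r ×ˢ QQ K s,
      ENNReal.ofReal ((k : ℝ) ^ 2 * M (gridIdx k hk p.1) (gridIdx k hk p.2)) =
      ∫⁻ q, ENNReal.ofReal ((k : ℝ) ^ 2 * M q.1 q.2)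
        ∂((volume.restrict (QQ K r ×ˢ QQ K s)).map
          (fun p : Sq => (gridIdx k hk p.1, gridIdx k hk p.2))) := by
    rw [lintegral_map (Measurable.of_discrete) hG]
  rw [h1, lintegral_fintype, Fintype.sum_prod_type]
  have h2 : ∀ i j, ((volume.restrict (QQ K r ×ˢ QQ K s)).map
      (fun p : Sq => (gridIdx k hk p.1, gridIdx k hk p.2))) {(i, j)} =
      ENNReal.ofReal (ww k K i r * ww k K j s) := by
    intro i j
    rw [Measure.map_apply hG (measurableSet_singleton _),
      Measure.restrict_apply (hG (measurableSet_singleton _)),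
      ENNReal.ofReal_mul (ww_nonneg _ _ _ _), ofReal_ww, ofReal_ww,
      ← vol_inter_fiber k hk i _ (PP_sub K hK r), ← vol_inter_fiber k hk j _ (PP_sub K hK s),
      ← Measure.prod_prod]
    rw [← Measure.volume_eq_prod]
    congr 1
    ext p
    simp only [Set.mem_inter_iff, Set.mem_preimage, Set.mem_singleton_iff, Prod.mk.injEq,
      Set.mem_prod, QQ]
    tauto
  simp_rw [h2]
  rw [Finset.mul_sum, ENNReal.ofReal_sum_of_nonneg]
  · refine Finset.sum_congr rfl fun i _ => ?_
    rw [Finset.mul_sum, ENNReal.ofReal_sum_of_nonneg]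
    · refine Finset.sum_congr rfl fun j _ => ?_
      rw [← ENNReal.ofReal_mul (mul_nonneg (by positivity) (hM i j))]
      congr 1
      ring
    · intro j _
      have := hM i j
      have := ww_nonneg k K i r
      have := ww_nonneg k K j s
      positivity
  · intro i _
    refine mul_nonneg (by positivity) (Finset.sum_nonneg fun j _ => ?_)
    have := hM i j
    have := ww_nonneg k K i r
    have := ww_nonneg k K j s
    positivity

lemma muM_rect_self (K : ℕ) (hK : 0 < K) (N : Matrix (Fin K) (Fin K) ℝ)
    (hN : ∀ i j, 0 ≤ N i j) (r s : Fin K) :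
    muM N (QQ K r ×ˢ QQ K s) = ENNReal.ofReal (N r s) := by
  have hK' : (0 : ℝ) < K := by exact_mod_cast hK
  rw [muM, dif_pos hK, withDensity_apply _ ((QQ_meas K r).prod (QQ_meas K s))]
  rw [setLIntegral_congr_fun (g := fun _ => ENNReal.ofReal ((K : ℝ) ^ 2 * N r s))
    ((QQ_meas K r).prod (QQ_meas K s))]
  · rw [setLIntegral_const, Measure.volume_eq_prod, Measure.prod_prod, vol_QQ K hK, vol_QQ K hK,
      ← ENNReal.ofReal_mul (by positivity),
      ← ENNReal.ofReal_mul (mul_nonneg (by positivity) (hN r s))]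
    congr 1
    field_simp
  · rintro p ⟨hp1, hp2⟩
    simp only [gridIdx_of_mem K hK _ _ hp1, gridIdx_of_mem K hK _ _ hp2]

lemma frac_le_one {k : ℕ} {f : Fin k → unitInterval → ℝ} (hf : IsFracPartition k f)
    (i : Fin k) (x : unitInterval) : f i x ≤ 1 := by
  rw [← hf.2.2.1 x]
  exact Finset.single_le_sum (f := fun i => f i x) (fun j _ => hf.2.1 j x) (Finset.mem_univ i)

lemma frac_int {k : ℕ} {f : Fin k → unitInterval → ℝ} (hf : IsFracPartition k f)
    (i : Fin k) : Integrable (f i) :=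
  Integrable.of_bound (hf.1 i).aestronglyMeasurable 1 (Eventually.of_forall fun x => by
    rw [Real.norm_of_nonneg (hf.2.1 i x)]; exact frac_le_one hf i x)

lemma frac_int2 {k : ℕ} {f : Fin k → unitInterval → ℝ} (hf : IsFracPartition k f)
    (μ : Measure Sq) [IsFiniteMeasure μ] (i j : Fin k) :
    Integrable (fun p : Sq => f i p.1 * f j p.2) μ :=
  Integrable.of_bound (((hf.1 i).comp measurable_fst).mul
    ((hf.1 j).comp measurable_snd)).aestronglyMeasurable 1 (Eventually.of_forall fun p => by
    rw [Real.norm_of_nonneg (mul_nonneg (hf.2.1 i _) (hf.2.1 j _))]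
    exact mul_le_one₀ (frac_le_one hf i _) (hf.2.1 j _) (frac_le_one hf j _))


/-- Given an s-graphon `ν`, a fractional partition `f₁,…,f_k` with density
matrix `M`, and `K ∈ ℕ`, the functions
`g_r = k ∑_i λ( ((i−1)/k, i/k) ∩ ((r−1)/K, r/K) ) f_i` form a fractional partition into `K`
parts, their density matrix `N` belongs to `C(ν,K)`, and
`μ_N = μ_M` on each open grid rectangle `((r−1)/K, r/K) × ((s−1)/K, s/K)`. -/
theorem stmt14 (ν : SGraphon) (k K : ℕ) (hk : 0 < k) (hK : 0 < K)
    (f : Fin k → unitInterval → ℝ) (hf : IsFracPartition k f) :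
    letI g : Fin K → unitInterval → ℝ := fun r x =>
      (k : ℝ) * ∑ i : Fin k,
        ((volume : Measure ℝ)
            (Set.Ioo (((i : ℕ) : ℝ) / k) ((((i : ℕ) : ℝ) + 1) / k) ∩
             Set.Ioo (((r : ℕ) : ℝ) / K) ((((r : ℕ) : ℝ) + 1) / K))).toReal * f i x
    letI M : Matrix (Fin k) (Fin k) ℝ := fun i j => ∫ p, f i p.1 * f j p.2 ∂ν.toMeasure
    letI N : Matrix (Fin K) (Fin K) ℝ := fun r s => ∫ p, g r p.1 * g s p.2 ∂ν.toMeasure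
    IsFracPartition K g ∧ N ∈ kShape ν.toMeasure K ∧
      ∀ r s : Fin K,
        muM N ((Subtype.val ⁻¹' Set.Ioo (((r : ℕ) : ℝ) / K) ((((r : ℕ) : ℝ) + 1) / K)) ×ˢ
               (Subtype.val ⁻¹' Set.Ioo (((s : ℕ) : ℝ) / K) ((((s : ℕ) : ℝ) + 1) / K))) =
        muM M ((Subtype.val ⁻¹' Set.Ioo (((r : ℕ) : ℝ) / K) ((((r : ℕ) : ℝ) + 1) / K)) ×ˢ
               (Subtype.val ⁻¹' Set.Ioo (((s : ℕ) : ℝ) / K) ((((s : ℕ) : ℝ) + 1) / K))) := by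
  let g : Fin K → unitInterval → ℝ := fun r x => (k : ℝ) * ∑ i, ww k K i r * f i x
  let M : Matrix (Fin k) (Fin k) ℝ := fun i j => ∫ p, f i p.1 * f j p.2 ∂ν.toMeasure
  let N : Matrix (Fin K) (Fin K) ℝ := fun r s => ∫ p, g r p.1 * g s p.2 ∂ν.toMeasure
  change IsFracPartition K g ∧ N ∈ kShape ν.toMeasure K ∧
    ∀ r s : Fin K, muM N (QQ K r ×ˢ QQ K s) = muM M (QQ K r ×ˢ QQ K s)
  have hk' : (0 : ℝ) < k := by exact_mod_cast hk
  have hg : ∀ r x, g r x = (k : ℝ) * ∑ i, ww k K i r * f i x := fun _ _ => rfl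
  have hG : IsFracPartition K g := by
    refine ⟨fun r => ?_, fun r x => ?_, fun x => ?_, fun r => ?_⟩
    · exact (Finset.measurable_sum _ fun i _ => (hf.1 i).const_mul _).const_mul _
    · rw [hg]
      exact mul_nonneg hk'.le (Finset.sum_nonneg fun i _ =>
        mul_nonneg (ww_nonneg _ _ _ _) (hf.2.1 i x))
    · simp_rw [hg]
      rw [← Finset.mul_sum, Finset.sum_comm]
      simp_rw [← Finset.sum_mul, ww_sum' k K hk hK]
      rw [← Finset.mul_sum, hf.2.2.1 x]
      field_simp
    · simp_rw [hg]
      rw [integral_const_mul, integral_finsetSum _ fun i _ => (frac_int hf i).const_mul _]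
      simp_rw [integral_const_mul, hf.2.2.2]
      rw [← Finset.sum_mul, ww_sum k K hk hK]
      field_simp
  refine ⟨hG, subset_closure ⟨g, hG, fun _ _ => rfl⟩, fun r s => ?_⟩
  have : IsFiniteMeasure ν.toMeasure := by unfold SGraphon.toMeasure; infer_instance
  have hM : ∀ i j, 0 ≤ M i j := fun i j =>
    integral_nonneg fun p => mul_nonneg (hf.2.1 i _) (hf.2.1 j _)
  have hN : ∀ i j, 0 ≤ N i j := fun i j =>
    integral_nonneg fun p => mul_nonneg (hG.2.1 i _) (hG.2.1 j _)
  rw [muM_rect_self K hK N hN, muM_rect k K hk hK M hM]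
  congr 1
  change ∫ p, g r p.1 * g s p.2 ∂ν.toMeasure = _
  have h1 : ∀ p : Sq, g r p.1 * g s p.2 =
      (k : ℝ) ^ 2 * ∑ i, ∑ j, ww k K i r * ww k K j s * (f i p.1 * f j p.2) := by
    intro p
    rw [hg, hg, mul_mul_mul_comm, ← pow_two, Finset.sum_mul_sum]
    congr 1
    refine Finset.sum_congr rfl fun i _ => Finset.sum_congr rfl fun j _ => ?_
    ring
  simp_rw [h1]
  rw [integral_const_mul, integral_finsetSum _ fun i _ => integrable_finsetSum _ fun j _ =>
    (frac_int2 hf ν.toMeasure i j).const_mul _]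
  congr 1
  refine Finset.sum_congr rfl fun i _ => ?_
  rw [integral_finsetSum _ fun j _ => (frac_int2 hf ν.toMeasure i j).const_mul _]
  refine Finset.sum_congr rfl fun j _ => ?_
  rw [integral_const_mul]

end
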